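/- There exist positive constants c_1 and c_2 such that for all n ≥ 1: c_1√n ≤ K_G(ℓ_∞^n, ℓ_∞^n) ≤ c_2√n, and c_1√n ≤ K_G(ℓ_1^n, ℓ_∞^n) = ρ(ℓ_1^n, ℓ_1^n) ≤ c_2√n. -/

import Mathlib

/-!
All the quantities involved reduce to statements about real `n × n` matrices. Say that `M`
satisfies `InjLeOne` if the bilinear form `∑ M j k x j y k` on `ℓ_∞ⁿ` has norm at most `1`, that
is, if `M` is in the unit ball of `ℓ_1ⁿ ⊗̌ ℓ_1ⁿ`; its norm in `ℓ_1ⁿ ⊗̂ ℓ_1ⁿ` is `∑ |M j k|`.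

Khinchine's inequality in `L¹` (from the second and fourth moments of Rademacher sums) gives
`∑ |M j k| ≤ (9/5) √n` for such `M` (`InjLeOne.sum_abs_le`). The order `√n` is attained by the
Hartley matrix `cos (2πjk/n) + sin (2πjk/n)`, which exists in every dimension, is symmetric with
bounded entries, and is `√n` times an orthogonal matrix (`hartley_orth`, `injLeOne_hartley`).

For `ℓ_∞ⁿ`, the projective norm of `v : ℓ_∞ⁿ → F` is `∑ ‖v (e j)‖`, so the upper bound for
`K_G(ℓ_∞ⁿ, ℓ_∞ⁿ)` is the inequality above applied to the matrix of `A`, and the lower bound follows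
by taking multiples of the Hartley matrix for both `A` and `u`.

Both `ρ(ℓ_1ⁿ, ℓ_1ⁿ)` and `K_G(ℓ_1ⁿ, ℓ_∞ⁿ)` equal the supremum of `∑ |C j k|` over `InjLeOne`
matrices `C`. For `ρ` this is the description of the projective norm of `ℓ_1ⁿ ⊗ ℓ_1ⁿ`. For `K_G` it
is trace duality: a Hahn–Banach functional norming `u ∘ Aᵀ` in `ℓ_∞ⁿ ⊗̂ ℓ_∞ⁿ` yields an `InjLeOne`
matrix paired against the matrix of `A`, whose entries are at most `1`
(`exists_injLeOne_projNorm_le`), and conversely the choice `A = sign C`, `u = id` recovers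
`∑ |C j k|` (`sum_abs_le_KG_one`).
-/

open scoped BigOperators

/-- The projective tensor norm of the element of `X* ⊗ F` corresponding (via the canonical
identification, `X` finite dimensional) to the continuous linear map `u : X → F`. -/
noncomputable def projNorm {X F : Type*} [NormedAddCommGroup X] [NormedSpace ℝ X]
    [NormedAddCommGroup F] [NormedSpace ℝ F] (u : X →L[ℝ] F) : ℝ :=
  sInf { r : ℝ | ∃ (k : ℕ) (η : Fin k → (X →L[ℝ] ℝ)) (f : Fin k → F),
    (∀ x, u x = ∑ i, η i x • f i) ∧ r = ∑ i, ‖η i‖ * ‖f i‖ }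

/-- The Grothendieck constant `K_G(E,F)`.  An element of `E ⊗ F` is encoded as a map
`u : E* → F`, an element of `E* ⊗ F` as a map `E → F`, and `A ⊗ id_F` sends `u` to
`u ∘ Aᵀ`, where `Aᵀ = A.flip : E → E*`. -/
noncomputable def KG (E F : Type*) [NormedAddCommGroup E] [NormedSpace ℝ E]
    [NormedAddCommGroup F] [NormedSpace ℝ F] : ℝ :=
  sSup { r : ℝ | ∃ (A : E →L[ℝ] (E →L[ℝ] ℝ)) (u : (E →L[ℝ] ℝ) →L[ℝ] F),
    ‖A‖ ≤ 1 ∧ ‖u‖ ≤ 1 ∧ r = projNorm (u.comp A.flip) }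

/-- `ρ(E,F)`: the norm of the identity from `E ⊗̌ F` to `E ⊗̂ F`. -/
noncomputable def rho (E F : Type*) [NormedAddCommGroup E] [NormedSpace ℝ E]
    [NormedAddCommGroup F] [NormedSpace ℝ F] : ℝ :=
  sSup { r : ℝ | ∃ u : (E →L[ℝ] ℝ) →L[ℝ] F, ‖u‖ ≤ 1 ∧ r = projNorm u }

/-- `A : E → E*` is non-negative: the corresponding tensor in `E* ⊗ E*` is a (finite) sum of
symmetric tensors `η ⊗ η`, i.e. lies in the convex hull of such tensors. -/
def IsNonnegMap {E : Type*} [NormedAddCommGroup E] [NormedSpace ℝ E]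
    (A : E →L[ℝ] (E →L[ℝ] ℝ)) : Prop :=
  ∃ (k : ℕ) (η : Fin k → (E →L[ℝ] ℝ)), ∀ x, A x = ∑ i, η i x • η i

/-- A tensor `z ∈ E ⊗ E` (encoded as a map `E* → E`) is non-negative if it is a finite sum of
symmetric tensors `e ⊗ e`. -/
def IsNonnegTensor {E : Type*} [NormedAddCommGroup E] [NormedSpace ℝ E]
    (z : (E →L[ℝ] ℝ) →L[ℝ] E) : Prop :=
  ∃ (k : ℕ) (e : Fin k → E), ∀ φ, z φ = ∑ i, φ (e i) • e i

/-- The positive Grothendieck constant `K_G⁺(E,F)`. -/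
noncomputable def KGpos (E F : Type*) [NormedAddCommGroup E] [NormedSpace ℝ E]
    [NormedAddCommGroup F] [NormedSpace ℝ F] : ℝ :=
  sSup { r : ℝ | ∃ (A : E →L[ℝ] (E →L[ℝ] ℝ)) (u : (E →L[ℝ] ℝ) →L[ℝ] F),
    IsNonnegMap A ∧ ‖A‖ ≤ 1 ∧ ‖u‖ ≤ 1 ∧ r = projNorm (u.comp A.flip) }

/-- The factorization constant `f(X,E)` of `X` through `E`. -/
noncomputable def factConst (X E : Type*) [NormedAddCommGroup X] [NormedSpace ℝ X]
    [NormedAddCommGroup E] [NormedSpace ℝ E] : ℝ :=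
  sInf { r : ℝ | ∃ (u : X →L[ℝ] E) (v : E →L[ℝ] X),
    v.comp u = ContinuousLinearMap.id ℝ X ∧ r = ‖u‖ * ‖v‖ }

/-- `γ(E) = sup { tr(BA) : A ≥ 0, B ≥ 0, ‖A‖ ≤ 1, ‖B‖ ≤ 1 }`. -/
noncomputable def gammaConst (E : Type*) [NormedAddCommGroup E] [NormedSpace ℝ E] : ℝ :=
  sSup { r : ℝ | ∃ (A : E →L[ℝ] (E →L[ℝ] ℝ)) (B : (E →L[ℝ] ℝ) →L[ℝ] E),
    IsNonnegMap A ∧ IsNonnegTensor B ∧ ‖A‖ ≤ 1 ∧ ‖B‖ ≤ 1 ∧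
    r = LinearMap.trace ℝ E ((B.comp A : E →L[ℝ] E) : E →ₗ[ℝ] E) }

/-- `ρ⁺(E)`: as `ρ(E,E)` but the supremum is restricted to non-negative tensors. -/
noncomputable def rhoPlus (E : Type*) [NormedAddCommGroup E] [NormedSpace ℝ E] : ℝ :=
  sSup { r : ℝ | ∃ z : (E →L[ℝ] ℝ) →L[ℝ] E,
    IsNonnegTensor z ∧ ‖z‖ ≤ 1 ∧ r = projNorm z }

/-- `X` has (Rademacher) cotype `q`. -/
def HasCotype (X : Type*) [NormedAddCommGroup X] [NormedSpace ℝ X] (q : ℝ) : Prop :=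
  ∃ C > 0, ∀ (n : ℕ) (x : Fin n → X),
    (∑ i, ‖x i‖ ^ q) ^ (1/q) ≤
      C * (((2 : ℝ) ^ n)⁻¹ *
        ∑ ε : Fin n → Bool, ‖∑ i, (if ε i then (1:ℝ) else -1) • x i‖ ^ 2) ^ (1/2 : ℝ)

open scoped ENNReal

/-! ### Rademacher sums and the Hartley matrix -/

/-- The real number `±1` attached to a Boolean. -/
def sgnB (b : Bool) : ℝ := if b then 1 else -1

/-- The matrix `M`, viewed as a bilinear form on `ℓ_∞ⁿ × ℓ_∞ⁿ` (equivalently, as an element of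
`ℓ_1ⁿ ⊗̌ ℓ_1ⁿ`), has norm at most `1`; stated in homogeneous form. -/
def InjLeOne {n : ℕ} (M : Fin n → Fin n → ℝ) : Prop :=
  ∀ (x y : Fin n → ℝ) (a b : ℝ), 0 ≤ a → 0 ≤ b → (∀ j, |x j| ≤ a) → (∀ k, |y k| ≤ b) →
    ∑ j, ∑ k, M j k * x j * y k ≤ a * b

theorem sum_signs_sq : ∀ (n : ℕ) (a : Fin n → ℝ),
    ∑ ε : Fin n → Bool, (∑ k, sgnB (ε k) * a k) ^ 2 = 2 ^ n * ∑ k, a k ^ 2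
  | 0, a => by simp
  | n + 1, a => by
    rw [← (Fin.consEquiv fun _ => Bool).sum_comp, Fintype.sum_prod_type]
    have ih := sum_signs_sq n (fun k => a k.succ)
    simp only [Fin.consEquiv_apply, Fin.sum_univ_succ, Fin.cons_zero, Fin.cons_succ,
      Fintype.sum_bool]
    rw [← Finset.sum_add_distrib]
    rw [Finset.sum_congr rfl (g := fun ε => 2 * a 0 ^ 2 +
      2 * (∑ k, sgnB (ε k) * a k.succ) ^ 2) (fun ε _ => by
        simp only [sgnB]; norm_num; ring), Finset.sum_add_distrib, ← Finset.mul_sum,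
      ← Finset.mul_sum, ih]
    simp only [Finset.sum_const, Finset.card_univ, Fintype.card_fun, Fintype.card_bool,
      Fintype.card_fin, nsmul_eq_mul]
    push_cast
    ring

/-- The fourth moment inequality `E S⁴ ≤ 3 (E S²)²` for Rademacher sums `S`. -/
theorem sum_signs_four : ∀ (n : ℕ) (a : Fin n → ℝ),
    ∑ ε : Fin n → Bool, (∑ k, sgnB (ε k) * a k) ^ 4 ≤ 3 * 2 ^ n * (∑ k, a k ^ 2) ^ 2
  | 0, a => by simp
  | n + 1, a => by
    rw [← (Fin.consEquiv fun _ => Bool).sum_comp, Fintype.sum_prod_type]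
    have ih := sum_signs_four n (fun k => a k.succ)
    have ih2 := sum_signs_sq n (fun k => a k.succ)
    simp only [Fin.consEquiv_apply, Fin.sum_univ_succ, Fin.cons_zero, Fin.cons_succ,
      Fintype.sum_bool]
    rw [← Finset.sum_add_distrib]
    rw [Finset.sum_congr rfl (g := fun ε => 2 * (∑ k, sgnB (ε k) * a k.succ) ^ 4 +
      12 * a 0 ^ 2 * (∑ k, sgnB (ε k) * a k.succ) ^ 2 + 2 * a 0 ^ 4) (fun ε _ => by
        simp only [sgnB]; norm_num; ring), Finset.sum_add_distrib, Finset.sum_add_distrib,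
      ← Finset.mul_sum, ← Finset.mul_sum, ih2]
    simp only [Finset.sum_const, Finset.card_univ, Fintype.card_fun, Fintype.card_bool,
      Fintype.card_fin, nsmul_eq_mul]
    push_cast
    have : 0 ≤ (2:ℝ) ^ n * a 0 ^ 4 := by positivity
    rw [pow_succ (2:ℝ) n]
    nlinarith

/-- Khinchine's inequality `(5/9) (∑ a k ²)^(1/2) ≤ E |∑ ε k a k|`, combined with the
Cauchy–Schwarz bound `∑ |a k| ≤ √n (∑ a k ²)^(1/2)`. -/
theorem khinchine_l1 {n : ℕ} (a : Fin n → ℝ) :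
    2 ^ n * ∑ k, |a k| ≤ 9 / 5 * √n * ∑ ε : Fin n → Bool, |∑ k, sgnB (ε k) * a k| := by
  set σ : ℝ := √(∑ k, a k ^ 2) with hσ
  have hs : σ ^ 2 = ∑ k, a k ^ 2 := Real.sq_sqrt (Finset.sum_nonneg fun _ _ => sq_nonneg _)
  have hcs : ∑ k, |a k| ≤ √n * σ := by
    rw [hσ, ← Real.sqrt_mul (by positivity)]
    apply Real.le_sqrt_of_sq_le
    have := sq_sum_le_card_mul_sum_sq (s := (Finset.univ : Finset (Fin n))) (f := fun k => |a k|)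
    simpa using this
  have key : 2 ^ n * (5 / 9 * σ) ≤ ∑ ε : Fin n → Bool, |∑ k, sgnB (ε k) * a k| := by
    have hσ0 : 0 ≤ σ := Real.sqrt_nonneg _
    rcases hσ0.eq_or_lt with h0 | h0
    · rw [← h0]; simp only [mul_zero]
      exact Finset.sum_nonneg fun _ _ => abs_nonneg _
    have h2 := sum_signs_sq n a
    have h4 := sum_signs_four n a
    -- the polynomial minorant `t ≥ t² - (4/27) t⁴` touches `t` at `t = 3/2`
    have hp : ∀ s : ℝ, s ^ 2 / σ - 4 / 27 * (s ^ 4 / σ ^ 3) ≤ |s| := by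
      intro s
      have e : ∀ t : ℝ, 0 ≤ t → t ^ 2 - 4 / 27 * t ^ 4 ≤ t := by
        intro t ht
        have : 0 ≤ t * ((t - 3 / 2) ^ 2 * (t + 3)) := by positivity
        nlinarith
      have h := mul_le_mul_of_nonneg_right (e (|s| / σ) (by positivity)) h0.le
      have q2 : |s| ^ 2 = s ^ 2 := sq_abs s
      have q4 : |s| ^ 4 = s ^ 4 := by rw [show 4 = 2 * 2 from rfl, pow_mul, q2, pow_mul]
      rw [div_pow, div_pow, q2, q4, div_mul_cancel₀ _ h0.ne'] at h
      refine le_trans (le_of_eq ?_) h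
      field_simp
    calc 2 ^ n * (5 / 9 * σ) = (2 ^ n * σ ^ 2) / σ - 4 / 27 * ((3 * 2 ^ n * (σ ^ 2) ^ 2) / σ ^ 3) := by
          field_simp; ring
      _ ≤ (∑ ε : Fin n → Bool, (∑ k, sgnB (ε k) * a k) ^ 2) / σ
          - 4 / 27 * ((∑ ε : Fin n → Bool, (∑ k, sgnB (ε k) * a k) ^ 4) / σ ^ 3) := by
          rw [h2, hs]; gcongr
      _ = ∑ ε : Fin n → Bool, ((∑ k, sgnB (ε k) * a k) ^ 2 / σ
          - 4 / 27 * ((∑ k, sgnB (ε k) * a k) ^ 4 / σ ^ 3)) := by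
          rw [Finset.sum_sub_distrib, ← Finset.mul_sum, Finset.sum_div, Finset.sum_div]
      _ ≤ _ := Finset.sum_le_sum fun ε _ => hp _
  have hn := Real.sqrt_nonneg (n : ℝ)
  calc 2 ^ n * ∑ k, |a k| ≤ 2 ^ n * (√n * σ) := by gcongr
    _ = 9 / 5 * √n * (2 ^ n * (5 / 9 * σ)) := by ring
    _ ≤ _ := by gcongr

/-- Littlewood-type inequality: the `ℓ_1` norm of the entries of a bilinear form on `ℓ_∞ⁿ`
exceeds its norm by a factor of at most `(9/5) √n`. -/
theorem InjLeOne.sum_abs_le {n : ℕ} {M : Fin n → Fin n → ℝ} (hM : InjLeOne M) :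
    ∑ j, ∑ k, |M j k| ≤ 9 / 5 * √n := by
  have h1 : ∀ ε : Fin n → Bool, ∑ j, |∑ k, sgnB (ε k) * M j k| ≤ 1 := by
    intro ε
    have := hM (fun j => SignType.sign (∑ k, sgnB (ε k) * M j k)) (fun k => sgnB (ε k)) 1 1
      zero_le_one zero_le_one
      (fun j => by rcases SignType.sign (∑ k, sgnB (ε k) * M j k) <;> simp)
      (fun k => by simp only [sgnB]; split_ifs <;> simp)
    rw [mul_one] at this
    refine le_trans (le_of_eq ?_) this
    refine Finset.sum_congr rfl fun j _ => ?_
    rw [← sign_mul_self, Finset.mul_sum]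
    exact Finset.sum_congr rfl fun k _ => by ring
  have h2 : (2:ℝ) ^ n * ∑ j, ∑ k, |M j k| ≤ 2 ^ n * (9 / 5 * √n) := by
    calc (2:ℝ) ^ n * ∑ j, ∑ k, |M j k| = ∑ j, 2 ^ n * ∑ k, |M j k| := Finset.mul_sum ..
      _ ≤ ∑ j, 9 / 5 * √n * ∑ ε : Fin n → Bool, |∑ k, sgnB (ε k) * M j k| :=
        Finset.sum_le_sum fun j _ => khinchine_l1 _
      _ = 9 / 5 * √n * ∑ ε : Fin n → Bool, ∑ j, |∑ k, sgnB (ε k) * M j k| := by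
        rw [← Finset.mul_sum, Finset.sum_comm]
      _ ≤ 9 / 5 * √n * ∑ ε : Fin n → Bool, 1 := by
        gcongr with ε; exact h1 ε
      _ = _ := by simp; ring
  exact le_of_mul_le_mul_left h2 (by positivity)

theorem sum_exp_root {n : ℕ} (hn : 1 ≤ n) (m : ℤ) :
    ∑ k : Fin n, Complex.exp (((2 * Real.pi * m * (k : ℕ) / n : ℝ) : ℂ) * Complex.I) =
      if (n : ℤ) ∣ m then (n : ℂ) else 0 := by
  have hζ := Complex.isPrimitiveRoot_exp n (by omega)
  set ζ := Complex.exp (2 * Real.pi * Complex.I / n) with hζd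
  have e : ∀ k : Fin n, Complex.exp (((2 * Real.pi * m * (k : ℕ) / n : ℝ) : ℂ) * Complex.I) =
      (ζ ^ m) ^ (k : ℕ) := by
    intro k
    rw [hζd, ← Complex.exp_int_mul, ← Complex.exp_nat_mul]
    congr 1
    push_cast
    ring
  simp_rw [e]
  rw [Fin.sum_univ_eq_sum_range (fun k => (ζ ^ m) ^ k)]
  split_ifs with h
  · rw [(hζ.zpow_eq_one_iff_dvd m).2 h]; simp
  · have h1 : ζ ^ m ≠ 1 := fun hz => h ((hζ.zpow_eq_one_iff_dvd m).1 hz)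
    have h2 := mul_geom_sum (ζ ^ m) n
    rw [← zpow_natCast, ← zpow_mul, mul_comm m, zpow_mul, zpow_natCast, hζ.pow_eq_one, one_zpow,
      sub_self] at h2
    exact (mul_eq_zero.1 h2).resolve_left (sub_ne_zero.2 h1)

/-- The (unnormalised) Hartley matrix `cos θ + sin θ` with `θ = 2πjk/n`; it is symmetric, has
entries of modulus at most `2`, and is `√n` times an orthogonal matrix. -/
noncomputable def hartley (n : ℕ) (j k : Fin n) : ℝ :=
  Real.cos (2 * Real.pi * (j : ℕ) * (k : ℕ) / n) + Real.sin (2 * Real.pi * (j : ℕ) * (k : ℕ) / n)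

theorem hartley_abs_le (n : ℕ) (j k : Fin n) : |hartley n j k| ≤ 2 :=
  (abs_add_le _ _).trans (by
    have := Real.abs_cos_le_one (2 * Real.pi * (j : ℕ) * (k : ℕ) / n)
    have := Real.abs_sin_le_one (2 * Real.pi * (j : ℕ) * (k : ℕ) / n)
    linarith)

theorem hartley_orth {n : ℕ} (hn : 1 ≤ n) (i j : Fin n) :
    ∑ k, hartley n i k * hartley n j k = if i = j then (n : ℝ) else 0 := by
  have hc := congrArg Complex.re (sum_exp_root hn ((i : ℕ) - (j : ℕ) : ℤ))
  have hs := congrArg Complex.im (sum_exp_root hn ((i : ℕ) + (j : ℕ) : ℤ))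
  rw [Complex.re_sum] at hc
  rw [Complex.im_sum] at hs
  simp only [Complex.exp_ofReal_mul_I_re] at hc
  simp only [Complex.exp_ofReal_mul_I_im] at hs
  have hs0 : (if (n : ℤ) ∣ ((i : ℕ) + (j : ℕ) : ℤ) then (n : ℂ) else 0).im = 0 := by
    split_ifs <;> simp
  rw [hs0] at hs
  have hd : (n : ℤ) ∣ ((i : ℕ) - (j : ℕ) : ℤ) ↔ i = j := by
    constructor
    · intro h
      have := Int.eq_zero_of_abs_lt_dvd h (by rw [abs_lt]; omega)
      exact Fin.ext (by omega)
    · rintro rfl; simp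
  rw [show (if i = j then (n : ℝ) else 0) =
      (if (n : ℤ) ∣ ((i : ℕ) - (j : ℕ) : ℤ) then (n : ℂ) else 0).re by
    simp only [hd]; split_ifs <;> simp, ← hc, ← add_zero (∑ k : Fin n, Real.cos _), ← hs,
    ← Finset.sum_add_distrib]
  refine Finset.sum_congr rfl fun k _ => ?_
  simp only [hartley]
  push_cast
  rw [show 2 * Real.pi * ((i : ℕ) - (j : ℕ) : ℝ) * (k : ℕ) / n =
      2 * Real.pi * (i : ℕ) * (k : ℕ) / n - 2 * Real.pi * (j : ℕ) * (k : ℕ) / n by ring,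
    show 2 * Real.pi * ((i : ℕ) + (j : ℕ) : ℝ) * (k : ℕ) / n =
      2 * Real.pi * (i : ℕ) * (k : ℕ) / n + 2 * Real.pi * (j : ℕ) * (k : ℕ) / n by ring,
    Real.cos_sub, Real.sin_add]
  ring

/-- Up to the factor `n ^ (3/2)`, the Hartley matrix is a contraction `ℓ_∞ⁿ → ℓ_1ⁿ`: it acts with
norm `√n` on `ℓ_2ⁿ`, and each of the two passages to `ℓ_2ⁿ` costs another `√n`. -/
theorem injLeOne_hartley {n : ℕ} (hn : 1 ≤ n) :
    InjLeOne fun j k => hartley n j k / (n * √n) := by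
  intro x y a b ha hb hx hy
  have hsq : √(n : ℝ) ^ 2 = n := Real.sq_sqrt (by positivity)
  have hpos : (0:ℝ) < n * √n := by positivity
  have hball : ∀ (z : Fin n → ℝ) (c : ℝ), (∀ j, |z j| ≤ c) → ∑ j, z j ^ 2 ≤ n * c ^ 2 := by
    intro z c hz
    calc ∑ j, z j ^ 2 ≤ ∑ _j : Fin n, c ^ 2 := Finset.sum_le_sum fun j _ => by
          rw [← sq_abs]; gcongr; exact hz j
      _ = _ := by simp
  set v : Fin n → ℝ := fun k => ∑ j, hartley n j k * x j with hv
  have hvsq : ∑ k, v k ^ 2 = n * ∑ j, x j ^ 2 := by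
    calc ∑ k, v k ^ 2 = ∑ k, ∑ i, ∑ j, (x i * x j) * (hartley n i k * hartley n j k) := by
          refine Finset.sum_congr rfl fun k _ => ?_
          rw [hv, pow_two, Finset.sum_mul_sum]
          exact Finset.sum_congr rfl fun i _ => Finset.sum_congr rfl fun j _ => by ring
      _ = ∑ i, ∑ j, (x i * x j) * ∑ k, (hartley n i k * hartley n j k) := by
          rw [Finset.sum_comm]
          refine Finset.sum_congr rfl fun i _ => ?_
          rw [Finset.sum_comm]
          exact Finset.sum_congr rfl fun j _ => by rw [Finset.mul_sum]
      _ = _ := by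
          simp only [hartley_orth hn, mul_ite, mul_zero, Finset.sum_ite_eq, Finset.mem_univ, if_true]
          rw [Finset.mul_sum]
          exact Finset.sum_congr rfl fun i _ => by ring
  have hcs := Finset.sum_mul_sq_le_sq_mul_sq Finset.univ v y
  have hle : ∑ k, v k * y k ≤ a * b * (n * √n) := by
    apply le_of_sq_le_sq _ (by positivity)
    calc _ ≤ _ := hcs
      _ ≤ (n * (n * a ^ 2)) * (n * b ^ 2) := by
        rw [hvsq]; gcongr
        · exact hball x a hx
        · exact hball y b hy
      _ = _ := by rw [mul_pow, mul_pow, mul_pow, hsq]; ring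
  have : ∑ j, ∑ k, hartley n j k / (n * √n) * x j * y k = (∑ k, v k * y k) / (n * √n) := by
    rw [Finset.sum_comm, Finset.sum_div]
    refine Finset.sum_congr rfl fun k _ => ?_
    rw [hv, Finset.sum_mul, Finset.sum_div]
    exact Finset.sum_congr rfl fun j _ => by ring
  rw [this, div_le_iff₀ hpos]
  exact hle

theorem sum_hartley_sq {n : ℕ} (hn : 1 ≤ n) :
    ∑ j, ∑ k, hartley n j k / 2 * (hartley n j k / (n * √n)) = 1 / 2 * √n := by
  have h : ∀ j, ∑ k, hartley n j k / 2 * (hartley n j k / (n * √n)) = n / (2 * (n * √n)) := by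
    intro j
    have := hartley_orth hn j j
    rw [if_pos rfl] at this
    nth_rewrite 3 [← this]
    rw [Finset.sum_div]
    exact Finset.sum_congr rfl fun k _ => by ring
  have hsq : √(n : ℝ) ^ 2 = n := Real.sq_sqrt (by positivity)
  have hpos : (0:ℝ) < √n := by positivity
  simp only [h, Finset.sum_const, Finset.card_univ, Fintype.card_fin, nsmul_eq_mul]
  field_simp
  nlinarith

/-! ### The projective norm -/

section Projective

variable {X F : Type*} [NormedAddCommGroup X] [NormedSpace ℝ X]
  [NormedAddCommGroup F] [NormedSpace ℝ F]

theorem projNorm_nonneg (u : X →L[ℝ] F) : 0 ≤ projNorm u := by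
  apply Real.sInf_nonneg
  rintro r ⟨k, η, f, -, rfl⟩
  positivity

theorem projNorm_le {u : X →L[ℝ] F} {k : ℕ} (η : Fin k → (X →L[ℝ] ℝ)) (f : Fin k → F)
    (h : ∀ x, u x = ∑ i, η i x • f i) : projNorm u ≤ ∑ i, ‖η i‖ * ‖f i‖ := by
  refine csInf_le ⟨0, ?_⟩ ⟨k, η, f, h, rfl⟩
  rintro r ⟨k, η, f, -, rfl⟩
  positivity

theorem projNorm_smulRight_le (η : X →L[ℝ] ℝ) (f : F) :
    projNorm (η.smulRight f) ≤ ‖η‖ * ‖f‖ := by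
  simpa using projNorm_le (u := η.smulRight f) (k := 1) (fun _ => η) (fun _ => f) (by simp)

variable [FiniteDimensional ℝ X]

/-- Finite dimension of `X` guarantees that a representation exists, so that the infimum defining
`projNorm` is not taken over the empty set. -/
theorem projNorm_set_nonempty (u : X →L[ℝ] F) :
    { r : ℝ | ∃ (k : ℕ) (η : Fin k → (X →L[ℝ] ℝ)) (f : Fin k → F),
      (∀ x, u x = ∑ i, η i x • f i) ∧ r = ∑ i, ‖η i‖ * ‖f i‖ }.Nonempty := by
  let b := Module.finBasis ℝ X
  refine ⟨_, _, fun i => LinearMap.toContinuousLinearMap (b.coord i), fun i => u (b i), ?_, rfl⟩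
  intro x
  conv_lhs => rw [← b.sum_repr x]
  simp only [map_sum, map_smul]
  rfl

theorem le_projNorm {u : X →L[ℝ] F} {r : ℝ}
    (h : ∀ (k : ℕ) (η : Fin k → (X →L[ℝ] ℝ)) (f : Fin k → F),
      (∀ x, u x = ∑ i, η i x • f i) → r ≤ ∑ i, ‖η i‖ * ‖f i‖) : r ≤ projNorm u := by
  refine le_csInf (projNorm_set_nonempty u) ?_
  rintro _ ⟨k, η, f, hu, rfl⟩
  exact h k η f hu

theorem projNorm_add_le (u v : X →L[ℝ] F) : projNorm (u + v) ≤ projNorm u + projNorm v := by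
  refine le_of_forall_pos_le_add fun ε hε => ?_
  obtain ⟨_, ⟨k, η, f, hu, rfl⟩, h1⟩ := Real.lt_sInf_add_pos (projNorm_set_nonempty u) (half_pos hε)
  obtain ⟨_, ⟨l, θ, g, hv, rfl⟩, h2⟩ := Real.lt_sInf_add_pos (projNorm_set_nonempty v) (half_pos hε)
  have := projNorm_le (u := u + v) (Fin.append η θ) (Fin.append f g) (fun x => by
    simp [Fin.sum_univ_add, hu, hv])
  simp only [Fin.sum_univ_add, Fin.append_left, Fin.append_right] at this
  unfold projNorm at this ⊢
  linarith

theorem projNorm_smul_le {c : ℝ} (hc : 0 < c) (u : X →L[ℝ] F) :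
    projNorm (c • u) ≤ c * projNorm u := by
  rw [← div_le_iff₀' hc]
  refine le_projNorm fun k η f hu => ?_
  rw [div_le_iff₀' hc]
  refine (projNorm_le η (fun i => c • f i) fun x => ?_).trans (le_of_eq ?_)
  · simp [hu, Finset.smul_sum, smul_comm c]
  · rw [Finset.mul_sum]
    refine Finset.sum_congr rfl fun i _ => ?_
    rw [norm_smul, Real.norm_of_nonneg hc.le]; ring

theorem projNorm_smul {c : ℝ} (hc : 0 < c) (u : X →L[ℝ] F) :
    projNorm (c • u) = c * projNorm u := by
  refine (projNorm_smul_le hc u).antisymm ?_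
  have := projNorm_smul_le (inv_pos.2 hc) (c • u)
  rwa [inv_smul_smul₀ hc.ne', ← div_eq_inv_mul, le_div_iff₀' hc] at this

/-- Hahn–Banach: a functional on `X* ⊗ F` norming `w` for the projective norm. -/
theorem exists_norming (w : X →L[ℝ] F) :
    ∃ φ : (X →L[ℝ] F) →ₗ[ℝ] ℝ, φ w = projNorm w ∧ ∀ v, φ v ≤ projNorm v := by
  by_cases hw : w = 0
  · refine ⟨0, ?_, fun v => by simpa using projNorm_nonneg v⟩
    have := projNorm_le (u := w) (k := 0) (fun _ => 0) (fun _ => 0) (by simp [hw])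
    simp only [Finset.univ_eq_empty, Finset.sum_empty] at this
    simpa using (this.antisymm (projNorm_nonneg w)).symm
  obtain ⟨φ, h1, h2⟩ := exists_extension_of_le_sublinear
    (LinearPMap.mkSpanSingleton (σ := RingHom.id ℝ) w (projNorm w) hw) projNorm
    (fun c hc x => projNorm_smul hc x) projNorm_add_le (by
      rintro ⟨x, hx⟩
      obtain ⟨c, rfl⟩ := Submodule.mem_span_singleton.1 hx
      erw [LinearPMap.mkSpanSingleton'_apply]
      simp only [RingHom.id_apply, smul_eq_mul]
      rcases le_or_gt c 0 with hc | hc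
      · exact (mul_nonpos_of_nonpos_of_nonneg hc (projNorm_nonneg w)).trans (projNorm_nonneg _)
      · exact (projNorm_smul hc w).ge)
  refine ⟨φ, ?_, h2⟩
  have := h1 ⟨w, Submodule.mem_span_singleton_self w⟩
  rw [this]
  exact LinearPMap.mkSpanSingleton_apply ℝ ℝ hw (projNorm w)

end Projective

/-! ### Coordinates on `ℓ_pⁿ` and its dual -/

section Coordinates

variable {X F : Type*} [NormedAddCommGroup X] [NormedSpace ℝ X]
  [NormedAddCommGroup F] [NormedSpace ℝ F] {n : ℕ}

/-- The map `s ↦ ∑ s j • x j` is a contraction `ℓ_∞ⁿ → X`; stated in homogeneous form. -/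
def LinftyBound (x : Fin n → X) : Prop :=
  ∀ (s : Fin n → ℝ) (a : ℝ), 0 ≤ a → (∀ j, |s j| ≤ a) → ‖∑ j, s j • x j‖ ≤ a

theorem LinftyBound.sum_abs_le {x : Fin n → X} (hx : LinftyBound x) (η : X →L[ℝ] ℝ) :
    ∑ j, |η (x j)| ≤ ‖η‖ := by
  have h := hx (fun j => SignType.sign (η (x j))) 1 zero_le_one
    (fun j => by rcases SignType.sign (η (x j)) <;> simp)
  have h2 := (le_abs_self _).trans (η.le_opNorm (∑ j, ((SignType.sign (η (x j)) : ℝ) • x j)))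
  rw [map_sum] at h2
  calc ∑ j, |η (x j)| = ∑ j, η ((SignType.sign (η (x j)) : ℝ) • x j) :=
        Finset.sum_congr rfl fun j _ => by rw [map_smul, smul_eq_mul, sign_mul_self]
    _ ≤ _ := h2
    _ ≤ ‖η‖ * 1 := by gcongr
    _ = _ := mul_one _

/-- Composition with a contraction `ℓ_∞ⁿ → X` is a contraction `X* ⊗̂ F → ℓ_1ⁿ ⊗̂ F = ℓ_1ⁿ(F)`. -/
theorem LinftyBound.sum_norm_le_projNorm [FiniteDimensional ℝ X] {x : Fin n → X}
    (hx : LinftyBound x) (u : X →L[ℝ] F) : ∑ j, ‖u (x j)‖ ≤ projNorm u := by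
  refine le_projNorm fun k η f hu => ?_
  calc ∑ j, ‖u (x j)‖ ≤ ∑ j, ∑ i, |η i (x j)| * ‖f i‖ := by
        refine Finset.sum_le_sum fun j _ => ?_
        rw [hu]
        refine (norm_sum_le _ _).trans (le_of_eq ?_)
        simp [norm_smul]
    _ = ∑ i, (∑ j, |η i (x j)|) * ‖f i‖ := by
        rw [Finset.sum_comm]
        exact Finset.sum_congr rfl fun i _ => by rw [Finset.sum_mul]
    _ ≤ _ := by
        gcongr with i; exact hx.sum_abs_le _

/-- The space `ℓ_pⁿ`. -/
abbrev Ell (p : ℝ≥0∞) (n : ℕ) := PiLp p fun _ : Fin n => ℝ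

/-- The `j`-th coordinate functional on `ℓ_pⁿ`. -/
noncomputable abbrev pr (p : ℝ≥0∞) [Fact (1 ≤ p)] {n : ℕ} (j : Fin n) : Ell p n →L[ℝ] ℝ :=
  PiLp.proj p (fun _ : Fin n => ℝ) j

/-- The `j`-th unit vector of `ℓ_pⁿ`. -/
noncomputable abbrev bv (p : ℝ≥0∞) {n : ℕ} (j : Fin n) : Ell p n := PiLp.single p j (1 : ℝ)

theorem sum_coord (p : ℝ≥0∞) [Fact (1 ≤ p)] (x : Ell p n) : x = ∑ j, x j • bv p j := by
  ext i; simp [Pi.single_apply]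

theorem norm_top_le {x : Ell ⊤ n} {a : ℝ} (ha : 0 ≤ a) (h : ∀ j, |x j| ≤ a) : ‖x‖ ≤ a := by
  rw [PiLp.norm_eq_ciSup]
  exact Real.iSup_le h ha

theorem norm_pr_le (p : ℝ≥0∞) [Fact (1 ≤ p)] (j : Fin n) : ‖pr p j‖ ≤ 1 :=
  ContinuousLinearMap.opNorm_le_bound _ zero_le_one fun x => by
    simpa using PiLp.norm_apply_le x j

theorem linftyBound_bv : LinftyBound (X := Ell ⊤ n) (bv ⊤) := by
  intro s a ha hs
  refine norm_top_le ha fun j => ?_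
  simpa [Pi.single_apply] using hs j

theorem linftyBound_pr : LinftyBound (X := Ell 1 n →L[ℝ] ℝ) (pr 1) := by
  intro s a ha hs
  refine ContinuousLinearMap.opNorm_le_bound _ ha fun x => ?_
  rw [PiLp.norm_eq_of_L1, Finset.mul_sum]
  simp only [_root_.sum_apply, _root_.smul_apply, PiLp.proj_apply,
    smul_eq_mul]
  refine (norm_sum_le _ _).trans (Finset.sum_le_sum fun j _ => ?_)
  rw [norm_mul]
  gcongr
  exact hs j

/-- The bilinear form on `ℓ_pⁿ` with matrix `M`. -/
noncomputable def form (p : ℝ≥0∞) [Fact (1 ≤ p)] (M : Fin n → Fin n → ℝ) :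
    Ell p n →L[ℝ] (Ell p n →L[ℝ] ℝ) :=
  ∑ j, ∑ k, M j k • (pr p j).smulRight (pr p k)

theorem form_apply (p : ℝ≥0∞) [Fact (1 ≤ p)] (M : Fin n → Fin n → ℝ) (x y : Ell p n) :
    form p M x y = ∑ j, ∑ k, M j k * x j * y k := by
  simp [form, mul_assoc]

theorem form_bv (p : ℝ≥0∞) [Fact (1 ≤ p)] (M : Fin n → Fin n → ℝ) (j k : Fin n) :
    form p M (bv p j) (bv p k) = M j k := by
  rw [form_apply]
  simp

theorem norm_form_top_le {M : Fin n → Fin n → ℝ} (hM : InjLeOne M) : ‖form ⊤ M‖ ≤ 1 := by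
  have h : ∀ x y, form ⊤ M x y ≤ ‖x‖ * ‖y‖ := fun x y => by
    rw [form_apply]
    exact hM x y _ _ (norm_nonneg _) (norm_nonneg _) (PiLp.norm_apply_le x) (PiLp.norm_apply_le y)
  refine ContinuousLinearMap.opNorm_le_bound _ zero_le_one fun x => ?_
  rw [one_mul]
  refine ContinuousLinearMap.opNorm_le_bound _ (norm_nonneg _) fun y => ?_
  rw [Real.norm_eq_abs, abs_le']
  refine ⟨h x y, ?_⟩
  simpa using h (-x) y

theorem norm_form_one_le {M : Fin n → Fin n → ℝ} (hM : ∀ j k, |M j k| ≤ 1) : ‖form 1 M‖ ≤ 1 := by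
  refine ContinuousLinearMap.opNorm_le_bound _ zero_le_one fun x => ?_
  rw [one_mul]
  refine ContinuousLinearMap.opNorm_le_bound _ (norm_nonneg _) fun y => ?_
  rw [form_apply, PiLp.norm_eq_of_L1, PiLp.norm_eq_of_L1, Finset.sum_mul_sum]
  refine (norm_sum_le _ _).trans (Finset.sum_le_sum fun j _ => ?_)
  refine (norm_sum_le _ _).trans (Finset.sum_le_sum fun k _ => ?_)
  rw [norm_mul, norm_mul]
  gcongr
  exact mul_le_of_le_one_left (norm_nonneg _) (hM j k)

/-- The map `(ℓ_pⁿ)* → ℓ_qⁿ` sending `ψ` to `(∑ k, H i k * ψ (e k))_i`. -/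
noncomputable def dualMap (p q : ℝ≥0∞) [Fact (1 ≤ p)] [Fact (1 ≤ q)] (H : Fin n → Fin n → ℝ) :
    (Ell p n →L[ℝ] ℝ) →L[ℝ] Ell q n :=
  ∑ i, (ContinuousLinearMap.apply ℝ ℝ (∑ k, H i k • bv p k)).smulRight (bv q i)

theorem dualMap_apply (p q : ℝ≥0∞) [Fact (1 ≤ p)] [Fact (1 ≤ q)] (H : Fin n → Fin n → ℝ)
    (ψ : Ell p n →L[ℝ] ℝ) (i : Fin n) : dualMap p q H ψ i = ∑ k, H i k * ψ (bv p k) := by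
  simp [dualMap, Pi.single_apply]

end Coordinates

/-! ### Estimates for the constants -/

section Estimates

variable {n : ℕ}

theorem projNorm_comp_flip_top_le {A : Ell ⊤ n →L[ℝ] (Ell ⊤ n →L[ℝ] ℝ)}
    {u : (Ell ⊤ n →L[ℝ] ℝ) →L[ℝ] Ell ⊤ n} (hA : ‖A‖ ≤ 1) (hu : ‖u‖ ≤ 1) :
    projNorm (u.comp A.flip) ≤ 9 / 5 * √n := by
  have hM : InjLeOne fun j k : Fin n => A.flip (bv ⊤ j) (bv ⊤ k) := by
    intro x y a b ha hb hx hy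
    have e : ∑ j, ∑ k, A.flip (bv ⊤ j) (bv ⊤ k) * x j * y k =
        A.flip (∑ j, x j • bv ⊤ j) (∑ k, y k • bv ⊤ k) := by
      simp only [map_sum, map_smul, _root_.sum_apply, _root_.smul_apply, smul_eq_mul,
        Finset.mul_sum]
      rw [Finset.sum_comm]
      exact Finset.sum_congr rfl fun k _ => Finset.sum_congr rfl fun j _ => by ring
    rw [e]
    calc _ ≤ ‖A.flip‖ * ‖∑ j, x j • bv (n := n) ⊤ j‖ * ‖∑ k, y k • bv (n := n) ⊤ k‖ :=
          (le_abs_self _).trans (A.flip.le_opNorm₂ _ _)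
      _ ≤ 1 * a * b := by
          rw [ContinuousLinearMap.opNorm_flip]
          gcongr
          · exact linftyBound_bv x a ha hx
          · exact linftyBound_bv y b hb hy
      _ = a * b := by ring
  calc projNorm (u.comp A.flip) ≤ ∑ j, ‖pr ⊤ j‖ * ‖u.comp A.flip (bv ⊤ j)‖ :=
        projNorm_le _ _ fun x => by
          conv_lhs => rw [sum_coord ⊤ x]
          simp only [map_sum, map_smul, PiLp.proj_apply]
    _ ≤ ∑ j, 1 * (1 * ∑ k, |A.flip (bv ⊤ j) (bv ⊤ k)|) := by
        gcongr with j
        · exact norm_pr_le ⊤ j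
        · refine (u.le_opNorm _).trans ?_
          gcongr
          refine ContinuousLinearMap.opNorm_le_bound _ (by positivity) fun x => ?_
          conv_lhs => rw [sum_coord ⊤ x]
          rw [map_sum, Finset.sum_mul]
          refine (norm_sum_le _ _).trans (Finset.sum_le_sum fun k _ => ?_)
          rw [map_smul, norm_smul, mul_comm, ← Real.norm_eq_abs]
          exact mul_le_mul_of_nonneg_left (PiLp.norm_apply_le x k) (norm_nonneg _)
    _ ≤ _ := by simpa using hM.sum_abs_le

theorem bddAbove_KG_top : BddAbove { r : ℝ |
    ∃ (A : Ell ⊤ n →L[ℝ] (Ell ⊤ n →L[ℝ] ℝ)) (u : (Ell ⊤ n →L[ℝ] ℝ) →L[ℝ] Ell ⊤ n),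
      ‖A‖ ≤ 1 ∧ ‖u‖ ≤ 1 ∧ r = projNorm (u.comp A.flip) } := by
  refine ⟨9 / 5 * √n, ?_⟩
  rintro _ ⟨A, u, hA, hu, rfl⟩
  exact projNorm_comp_flip_top_le hA hu

theorem KG_top_le : KG (Ell ⊤ n) (Ell ⊤ n) ≤ 9 / 5 * √n := by
  refine Real.sSup_le ?_ (by positivity)
  rintro _ ⟨A, u, hA, hu, rfl⟩
  exact projNorm_comp_flip_top_le hA hu

theorem norm_dualMap_top_le {p : ℝ≥0∞} [Fact (1 ≤ p)] {H : Fin n → Fin n → ℝ}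
    (hH : ∀ i, ‖∑ k, H i k • bv p k‖ ≤ 1) : ‖dualMap p ⊤ H‖ ≤ 1 := by
  refine ContinuousLinearMap.opNorm_le_bound _ zero_le_one fun ψ => ?_
  rw [one_mul]
  refine norm_top_le (norm_nonneg _) fun i => ?_
  have e : ∑ k, H i k * ψ (bv p k) = ψ (∑ k, H i k • bv p k) := by
    simp only [map_sum, map_smul, smul_eq_mul]
  rw [dualMap_apply, e, ← Real.norm_eq_abs]
  refine (ψ.le_opNorm _).trans ?_
  exact mul_le_of_le_one_right (norm_nonneg _) (hH i)

/-- The pair `A = H / n ^ (3/2)`, `u = H / 2`, with `H` the Hartley matrix, witnesses the lower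
bound. -/
theorem le_KG_top (hn : 1 ≤ n) : 1 / 2 * √n ≤ KG (Ell ⊤ n) (Ell ⊤ n) := by
  set M : Fin n → Fin n → ℝ := fun j k => hartley n j k / (n * √n) with hM
  set H : Fin n → Fin n → ℝ := fun j k => hartley n j k / 2 with hH
  have hsymm : ∀ j k, M j k = M k j := fun j k => by
    simp only [hM, hartley, mul_right_comm (2 * Real.pi) (((j : Fin n) : ℕ) : ℝ)]
  refine le_csSup_of_le bddAbove_KG_top ⟨form ⊤ M, dualMap ⊤ ⊤ H,
    norm_form_top_le (injLeOne_hartley hn), norm_dualMap_top_le fun i => ?_, rfl⟩ ?_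
  · refine linftyBound_bv _ 1 zero_le_one fun k => ?_
    have := hartley_abs_le n i k
    rw [hH, abs_div, abs_two]
    linarith
  · refine le_trans ?_ (linftyBound_bv.sum_norm_le_projNorm _)
    rw [← sum_hartley_sq hn]
    refine Finset.sum_le_sum fun j _ => ?_
    refine le_trans ?_ (PiLp.norm_apply_le _ j)
    rw [ContinuousLinearMap.comp_apply, dualMap_apply]
    refine le_trans (le_of_eq ?_) (le_abs_self _)
    refine Finset.sum_congr rfl fun k _ => ?_
    rw [ContinuousLinearMap.flip_apply, form_bv, hsymm]

theorem projNorm_le_sum_abs (u : (Ell 1 n →L[ℝ] ℝ) →L[ℝ] Ell 1 n) :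
    projNorm u ≤ ∑ j, ∑ k, |u (pr 1 j) k| := by
  have hψ : ∀ ψ : Ell 1 n →L[ℝ] ℝ, ψ = ∑ j, ψ (bv 1 j) • pr 1 j := fun ψ => by
    ext x
    conv_lhs => rw [sum_coord 1 x]
    simp [mul_comm]
  refine (projNorm_le (fun j => ContinuousLinearMap.apply ℝ ℝ (bv 1 j)) (fun j => u (pr 1 j))
    fun ψ => ?_).trans ?_
  · conv_lhs => rw [hψ ψ]
    simp only [map_sum, map_smul, ContinuousLinearMap.apply_apply]
  · refine Finset.sum_le_sum fun j _ => ?_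
    rw [PiLp.norm_eq_of_L1]
    refine mul_le_of_le_one_left (by positivity) ?_
    refine ContinuousLinearMap.opNorm_le_bound _ zero_le_one fun ψ => ?_
    rw [ContinuousLinearMap.apply_apply, one_mul]
    simpa [PiLp.norm_single] using ψ.le_opNorm (bv 1 j)

theorem injLeOne_of_norm_le {u : (Ell 1 n →L[ℝ] ℝ) →L[ℝ] Ell 1 n} (hu : ‖u‖ ≤ 1) :
    InjLeOne fun j k => u (pr 1 j) k := by
  intro x y a b ha hb hx hy
  have e : ∑ j, ∑ k, u (pr 1 j) k * x j * y k = (∑ k, y k • pr 1 k) (u (∑ j, x j • pr 1 j)) := by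
    simp only [map_sum, map_smul, _root_.sum_apply, _root_.smul_apply, smul_eq_mul,
      Finset.mul_sum, PiLp.proj_apply]
    exact Finset.sum_congr rfl fun k _ => Finset.sum_congr rfl fun j _ => by ring
  rw [e]
  calc _ ≤ ‖∑ k, y k • pr (n := n) 1 k‖ * (‖u‖ * ‖∑ j, x j • pr (n := n) 1 j‖) :=
        (le_abs_self _).trans (ContinuousLinearMap.le_opNorm_of_le (∑ k, y k • pr (n := n) 1 k)
          (u.le_opNorm _))
    _ ≤ b * (1 * a) := by
        gcongr
        · exact linftyBound_pr y b hb hy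
        · exact linftyBound_pr x a ha hx
    _ = a * b := by ring

theorem sum_abs_le_rho {B : Fin n → Fin n → ℝ} (hB : InjLeOne B) :
    ∑ j, ∑ k, |B j k| ≤ rho (Ell 1 n) (Ell 1 n) := by
  have hbdd : BddAbove { r : ℝ | ∃ u : (Ell 1 n →L[ℝ] ℝ) →L[ℝ] Ell 1 n,
      ‖u‖ ≤ 1 ∧ r = projNorm u } := by
    refine ⟨9 / 5 * √n, ?_⟩
    rintro _ ⟨u, hu, rfl⟩
    exact (projNorm_le_sum_abs u).trans (injLeOne_of_norm_le hu).sum_abs_le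
  refine le_csSup_of_le hbdd ⟨dualMap 1 1 fun k j => B j k, ?_, rfl⟩ ?_
  · refine ContinuousLinearMap.opNorm_le_bound _ zero_le_one fun ψ => ?_
    rw [one_mul, PiLp.norm_eq_of_L1]
    have h := hB (fun j => ψ (bv 1 j))
      (fun k => SignType.sign (∑ j, B j k * ψ (bv 1 j))) ‖ψ‖ 1 (norm_nonneg _) zero_le_one
      (fun j => by simpa [PiLp.norm_single] using ψ.le_opNorm (bv 1 j))
      (fun k => by rcases SignType.sign (∑ j, B j k * ψ (bv 1 j)) <;> simp)
    rw [mul_one] at h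
    refine le_trans (le_of_eq ?_) h
    rw [Finset.sum_comm]
    refine Finset.sum_congr rfl fun k _ => ?_
    rw [dualMap_apply, Real.norm_eq_abs, ← self_mul_sign, Finset.sum_mul]
  · refine le_trans (le_of_eq ?_) (linftyBound_pr.sum_norm_le_projNorm _)
    refine Finset.sum_congr rfl fun j _ => ?_
    rw [PiLp.norm_eq_of_L1]
    refine Finset.sum_congr rfl fun k _ => ?_
    rw [dualMap_apply]
    simp

/-- Trace duality: a functional norming `u ∘ Aᵀ` in `ℓ_∞ⁿ ⊗̂ ℓ_∞ⁿ` gives rise to a bilinear form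
`B` on `ℓ_∞ⁿ` of norm at most `1`, whose pairing with the matrix of `A` (entries bounded by `1`)
is `projNorm (u ∘ Aᵀ)`. -/
theorem exists_injLeOne_projNorm_le {A : Ell 1 n →L[ℝ] (Ell 1 n →L[ℝ] ℝ)}
    {u : (Ell 1 n →L[ℝ] ℝ) →L[ℝ] Ell ⊤ n} (hA : ‖A‖ ≤ 1) (hu : ‖u‖ ≤ 1) :
    ∃ B : Fin n → Fin n → ℝ, InjLeOne B ∧ projNorm (u.comp A.flip) ≤ ∑ j, ∑ k, |B j k| := by
  obtain ⟨φ, h1, h2⟩ := exists_norming (u.comp A.flip)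
  refine ⟨fun j k => φ ((pr 1 j).smulRight (u (pr 1 k))), ?_, ?_⟩
  · intro x y a b ha hb hx hy
    have e : ∑ j, ∑ k, φ ((pr 1 j).smulRight (u (pr 1 k))) * x j * y k =
        φ ((∑ j, x j • pr 1 j).smulRight (u (∑ k, y k • pr 1 k))) := by
      have : (∑ j, x j • pr 1 j).smulRight (u (∑ k, y k • pr 1 k)) =
          ∑ j, ∑ k, (x j * y k) • (pr 1 j).smulRight (u (pr 1 k)) := by
        ext z : 1
        simp only [map_sum, map_smul, _root_.sum_apply, _root_.smul_apply, smul_eq_mul,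
          ContinuousLinearMap.smulRight_apply, Finset.smul_sum, smul_smul]
        rw [Finset.sum_comm]
        refine Finset.sum_congr rfl fun k _ => ?_
        rw [Finset.sum_mul, Finset.sum_smul]
        exact Finset.sum_congr rfl fun j _ => by congr 1; ring
      rw [this]
      simp only [map_sum, map_smul, smul_eq_mul]
      exact Finset.sum_congr rfl fun k _ => Finset.sum_congr rfl fun j _ => by ring
    rw [e]
    calc _ ≤ _ := h2 _
      _ ≤ _ := projNorm_smulRight_le _ _
      _ ≤ a * (1 * b) := by
        gcongr
        · exact linftyBound_pr x a ha hx
        · refine (u.le_opNorm _).trans ?_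
          gcongr
          exact linftyBound_pr y b hb hy
      _ = a * b := by ring
  · rw [← h1]
    have e : u.comp A.flip = ∑ j, ∑ k, A (bv 1 k) (bv 1 j) • (pr 1 j).smulRight (u (pr 1 k)) := by
      have hψ : ∀ j, A.flip (bv 1 j) = ∑ k, A (bv 1 k) (bv 1 j) • pr 1 k := fun j => by
        ext x
        rw [ContinuousLinearMap.flip_apply]
        conv_lhs => rw [sum_coord 1 x]
        simp [mul_comm]
      ext x : 1
      conv_lhs => rw [sum_coord 1 x]
      simp only [map_sum, map_smul, ContinuousLinearMap.comp_apply, hψ, _root_.sum_apply,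
        _root_.smul_apply, ContinuousLinearMap.smulRight_apply, PiLp.proj_apply, Finset.smul_sum]
      exact Finset.sum_congr rfl fun k _ => Finset.sum_congr rfl fun j _ => smul_comm _ _ _
    rw [e]
    simp only [map_sum, map_smul, smul_eq_mul]
    refine Finset.sum_le_sum fun j _ => Finset.sum_le_sum fun k _ => ?_
    refine (le_abs_self _).trans ?_
    rw [abs_mul]
    refine mul_le_of_le_one_left (abs_nonneg _) ?_
    have := A.le_of_opNorm₂_le_of_le hA (x := bv 1 k) (y := bv 1 j)
      (PiLp.norm_single 1 (fun _ => ℝ) k (1:ℝ)).le (PiLp.norm_single 1 (fun _ => ℝ) j (1:ℝ)).le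
    simpa using this

theorem sum_abs_le_KG_one {C : Fin n → Fin n → ℝ} (hC : InjLeOne C) :
    ∑ j, ∑ k, |C j k| ≤ KG (Ell 1 n) (Ell ⊤ n) := by
  have hbdd : BddAbove { r : ℝ |
      ∃ (A : Ell 1 n →L[ℝ] (Ell 1 n →L[ℝ] ℝ)) (u : (Ell 1 n →L[ℝ] ℝ) →L[ℝ] Ell ⊤ n),
        ‖A‖ ≤ 1 ∧ ‖u‖ ≤ 1 ∧ r = projNorm (u.comp A.flip) } := by
    refine ⟨9 / 5 * √n, ?_⟩
    rintro _ ⟨A, u, hA, hu, rfl⟩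
    obtain ⟨B, hB, h⟩ := exists_injLeOne_projNorm_le hA hu
    exact h.trans hB.sum_abs_le
  -- `A` has the entries `sign (C j k)`, and `u` is the canonical isometry `(ℓ_1ⁿ)* → ℓ_∞ⁿ`
  refine le_csSup_of_le hbdd ⟨form 1 fun k j => (SignType.sign (C j k) : ℝ),
    dualMap 1 ⊤ fun i k => if i = k then 1 else 0, norm_form_one_le fun k j => ?_,
    norm_dualMap_top_le fun i => ?_, rfl⟩ ?_
  · rcases SignType.sign (C j k) <;> simp
  · simp [PiLp.norm_single]
  · refine le_projNorm fun m η f hw => ?_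
    have hwk : ∀ j k, (SignType.sign (C j k) : ℝ) = ∑ i, η i (bv 1 j) * f i k := by
      intro j k
      have := congrArg (fun v : Ell ⊤ n => v k) (hw (bv 1 j))
      simp only [ContinuousLinearMap.comp_apply, dualMap_apply, ContinuousLinearMap.flip_apply,
        form_bv] at this
      simpa using this
    calc ∑ j, ∑ k, |C j k| = ∑ j, ∑ k, ∑ i, C j k * η i (bv 1 j) * f i k := by
          refine Finset.sum_congr rfl fun j _ => Finset.sum_congr rfl fun k _ => ?_
          rw [← self_mul_sign, hwk, Finset.mul_sum]
          exact Finset.sum_congr rfl fun i _ => by ring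
      _ = ∑ i, ∑ j, ∑ k, C j k * η i (bv 1 j) * f i k := by
          rw [Finset.sum_comm]
          simp_rw [Finset.sum_comm (s := Finset.univ (α := Fin n)) (t := Finset.univ (α := Fin m))]
          exact Finset.sum_congr rfl fun i _ => Finset.sum_comm
      _ ≤ _ := Finset.sum_le_sum fun i _ =>
          hC _ _ _ _ (norm_nonneg _) (norm_nonneg _)
            (fun j => by simpa [PiLp.norm_single] using (η i).le_opNorm (bv 1 j))
            (PiLp.norm_apply_le (f i))

theorem rho_nonneg : 0 ≤ rho (Ell 1 n) (Ell 1 n) := by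
  apply Real.sSup_nonneg
  rintro _ ⟨u, -, rfl⟩
  exact projNorm_nonneg u

theorem KG_nonneg : 0 ≤ KG (Ell 1 n) (Ell ⊤ n) := by
  apply Real.sSup_nonneg
  rintro _ ⟨A, u, -, -, rfl⟩
  exact projNorm_nonneg _

/-- Both constants equal the supremum of `∑ |C j k|` over bilinear forms `C` on `ℓ_∞ⁿ` of norm at
most `1`. -/
theorem KG_one_eq_rho : KG (Ell 1 n) (Ell ⊤ n) = rho (Ell 1 n) (Ell 1 n) := by
  apply le_antisymm
  · refine Real.sSup_le ?_ rho_nonneg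
    rintro _ ⟨A, u, hA, hu, rfl⟩
    obtain ⟨B, hB, h⟩ := exists_injLeOne_projNorm_le hA hu
    exact h.trans (sum_abs_le_rho hB)
  · refine Real.sSup_le ?_ KG_nonneg
    rintro _ ⟨u, hu, rfl⟩
    exact (projNorm_le_sum_abs u).trans (sum_abs_le_KG_one (injLeOne_of_norm_le hu))

theorem KG_one_le : KG (Ell 1 n) (Ell ⊤ n) ≤ 9 / 5 * √n := by
  refine Real.sSup_le ?_ (by positivity)
  rintro _ ⟨A, u, hA, hu, rfl⟩
  obtain ⟨B, hB, h⟩ := exists_injLeOne_projNorm_le hA hu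
  exact h.trans hB.sum_abs_le

theorem le_KG_one (hn : 1 ≤ n) : 1 / 2 * √n ≤ KG (Ell 1 n) (Ell ⊤ n) := by
  refine le_trans ?_ (sum_abs_le_KG_one (injLeOne_hartley hn))
  rw [← sum_hartley_sq hn]
  refine Finset.sum_le_sum fun j _ => Finset.sum_le_sum fun k _ => ?_
  refine (le_abs_self _).trans ?_
  rw [abs_mul]
  refine mul_le_of_le_one_left (abs_nonneg _) ?_
  have := hartley_abs_le n j k
  rw [abs_div, abs_two]
  linarith

end Estimates

/-- Lemma 4.4: `c₁√n ≤ K_G(ℓ_∞ⁿ, ℓ_∞ⁿ) ≤ c₂√n` and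
`c₁√n ≤ K_G(ℓ_1ⁿ, ℓ_∞ⁿ) = ρ(ℓ_1ⁿ, ℓ_1ⁿ) ≤ c₂√n`. -/
theorem statement9 :
    ∃ c₁ > (0:ℝ), ∃ c₂ > (0:ℝ), ∀ n : ℕ, 1 ≤ n →
      (c₁ * Real.sqrt n ≤
          KG (PiLp ⊤ fun _ : Fin n => ℝ) (PiLp ⊤ fun _ : Fin n => ℝ) ∧
        KG (PiLp ⊤ fun _ : Fin n => ℝ) (PiLp ⊤ fun _ : Fin n => ℝ) ≤ c₂ * Real.sqrt n) ∧
      (c₁ * Real.sqrt n ≤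
          KG (PiLp 1 fun _ : Fin n => ℝ) (PiLp ⊤ fun _ : Fin n => ℝ) ∧
        KG (PiLp 1 fun _ : Fin n => ℝ) (PiLp ⊤ fun _ : Fin n => ℝ) =
          rho (PiLp 1 fun _ : Fin n => ℝ) (PiLp 1 fun _ : Fin n => ℝ) ∧
        KG (PiLp 1 fun _ : Fin n => ℝ) (PiLp ⊤ fun _ : Fin n => ℝ) ≤ c₂ * Real.sqrt n) := by
  refine ⟨1 / 2, by norm_num, 9 / 5, by norm_num, fun n hn => ?_⟩
  exact ⟨⟨le_KG_top hn, KG_top_le⟩, le_KG_one hn, KG_one_eq_rho, KG_one_le⟩
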